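/- In the MLFP setting with A finite, assume there are c_f, c_v, c_ω, L ∈ [0,∞) with c_ω L < 1 and M > (1 + c_ω L(2|A| − 1))² (1 − c_ω L)^{−2}, a measurable weight function ω : 𝕏 → (0,∞), and a 𝒳/𝒜-measurable v : 𝕏 → ℝ^A such that for all (x,a) ∈ 𝕏 × A and r,s ∈ ℝ^A it holds that |f(x,r) − f(x,s)| ≤ L max_{b∈A}|r(b) − s(b)|, (E[|f(X^{0,x,a},0)|²])^{1/2} ≤ c_f ω(x), (E[‖v(X^{0,x,a})‖_∞²])^{1/2} ≤ c_v ω(x), (E[|ω(X^{0,x,a})|²])^{1/2} ≤ c_ω ω(x), and v(x)(a) = E[f(X^{0,x,a}, v(X^{0,x,a}))]. Then limsup_{n→∞} sup_{x∈𝕏} (E[‖v(x) − V_n^0(x)‖_∞²] / ω(x)²)^{1/2} = 0. -/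

import Mathlib

/-!
Write `c = cw * L`, `s = |A|`, `q = M ^ (-1/2)`, and let `ε n` be the supremum over `x` and `θ` of
the `L²`-norm of `‖v x - V n θ x‖` divided by `w x`, where `‖·‖` is the sup-norm on `A → ℝ`.
The proof establishes the error recursion
`ε n ≤ c * ε (n - 1) + s * (q ^ n * cf + ∑ l ∈ [1, n), q ^ (n - l) * c * (ε l + ε (l - 1)))`
and solves it.

* Bias. The field `V l θ` depends only on the σ-algebras `F η` with `η` a strict descendant of `θ`,
  so it is independent of `X θ`. By induction on `l`, its finite- and infinite-dimensional
  distributions do not depend on `θ` (`Setting.map_V`): the recursion is a sum over disjoint blocks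
  of coordinates, and the law of each summand follows by conditioning on the evaluation points.
  The induction has to treat arbitrary families of points because the coordinates of the increments
  evaluate the same field at different random points. Hence the expectations of the increments
  telescope, the mean of `V n θ x a` is `E f (X, V (n - 1) (X))`, and its distance to
  `v x a = E f (X, v (X))` is at most `c * ε (n - 1) * w x` (`Setting.bias_le`). As this part is
  deterministic, no factor `s` is lost.
* Fluctuations. For each level, the summands over `i` are independent with common mean, so the
  variance of their average is divided by `M ^ (n - l)` (`eLpNorm_average_le`); the `L²`-norm of
  one summand is at most `cf * w x` for `l = 0` and `c * (ε l + ε (l - 1)) * w x` otherwise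
  (`Setting.eLpNorm_incr`). Bounding the maximum over `A` by the sum costs the factor `s`.

The hypothesis on `M` says exactly that `c + 2 * s * c * q / (1 - q) < 1`, i.e. that the
coefficients of the recursion sum to less than `1`. By continuity there is room for some `β < 1`
such that `γ * β ^ n` is a super-solution for large `γ` (`exists_rate`, `rate_step`), whence
`ε n ≤ γ * β ^ n`.
-/

set_option linter.unusedSectionVars false

open MeasureTheory

namespace MLFP

open ProbabilityTheory
open scoped ENNReal

universe u

/-! ### Coordinate blocks -/

/-- The σ-algebra generated by the family `F` over the index set `S`. -/
abbrev sig {Ω : Type*} (F : List ℤ → MeasurableSpace Ω) (S : Set (List ℤ)) : MeasurableSpace Ω :=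
  ⨆ η ∈ S, F η

/-- The strict descendants of the index `θ`. -/
def desc (θ : List ℤ) : Set (List ℤ) := {η | ∃ ζ, ζ ≠ [] ∧ η = θ ++ ζ}

/-- The index block of the summand `(l, i)` of `V n θ`: all indices that extend
`(θ, l, i + 1)` or `(θ, -l, i + 1)`. -/
def block (θ : List ℤ) (l i : ℕ) : Set (List ℤ) :=
  {η | ∃ (e : ℤ) (ζ : List ℤ), e.natAbs = l ∧ η = θ ++ e :: ((i : ℤ) + 1) :: ζ}

/-- The index `(θ, l, i + 1)`. -/
abbrev pos (θ : List ℤ) (l i : ℕ) : List ℤ := θ ++ [(l : ℤ), (i : ℤ) + 1]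

/-- The index `(θ, -l, i + 1)`. -/
abbrev neg (θ : List ℤ) (l i : ℕ) : List ℤ := θ ++ [-(l : ℤ), (i : ℤ) + 1]

lemma sig_mono {Ω : Type*} (F : List ℤ → MeasurableSpace Ω) {S T : Set (List ℤ)} (h : S ⊆ T) :
    sig F S ≤ sig F T := biSup_mono h

lemma le_sig {Ω : Type*} (F : List ℤ → MeasurableSpace Ω) {S : Set (List ℤ)} {η : List ℤ}
    (h : η ∈ S) : F η ≤ sig F S := le_biSup F h

lemma sig_le {Ω : Type*} {F : List ℤ → MeasurableSpace Ω} {mΩ : MeasurableSpace Ω}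
    (hF : ∀ θ, F θ ≤ mΩ) (S : Set (List ℤ)) : sig F S ≤ mΩ := iSup₂_le fun η _ => hF η

lemma self_notMem_desc (θ : List ℤ) : θ ∉ desc θ := by
  rintro ⟨ζ, h, h'⟩
  simp_all

lemma notMem_desc_of_length {θ η : List ℤ} (h : η.length ≤ θ.length) : η ∉ desc θ := by
  rintro ⟨ζ, h1, rfl⟩
  exact h1 (by simpa using h)

lemma disjoint_desc {θ η : List ℤ} (h : θ ≠ η) (hl : θ.length = η.length) :
    Disjoint (desc θ) (desc η) := by
  rw [Set.disjoint_left]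
  rintro _ ⟨ζ, -, rfl⟩ ⟨ζ', -, h'⟩
  exact h (List.append_inj_left h' hl)

lemma block_subset_desc (θ : List ℤ) (l i : ℕ) : block θ l i ⊆ desc θ := by
  rintro _ ⟨e, ζ, -, rfl⟩
  exact ⟨_, by simp, rfl⟩

lemma pos_mem_block (θ : List ℤ) (l i : ℕ) : pos θ l i ∈ block θ l i :=
  ⟨l, [], by simp, rfl⟩

lemma desc_pos_subset (θ : List ℤ) (l i : ℕ) : desc (pos θ l i) ⊆ block θ l i := by
  rintro _ ⟨ζ, -, rfl⟩
  exact ⟨l, ζ, by simp, by simp⟩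

lemma desc_neg_subset (θ : List ℤ) (l i : ℕ) : desc (neg θ l i) ⊆ block θ l i := by
  rintro _ ⟨ζ, -, rfl⟩
  exact ⟨-l, ζ, by simp, by simp⟩

lemma disjoint_block (θ : List ℤ) {l i l' i' : ℕ} (h : (l, i) ≠ (l', i')) :
    Disjoint (block θ l i) (block θ l' i') := by
  rw [Set.disjoint_left]
  rintro _ ⟨e, ζ, he, rfl⟩ ⟨e', ζ', he', h'⟩
  simp only [List.append_cancel_left_eq, List.cons.injEq] at h'
  apply h
  obtain ⟨rfl, h2, -⟩ := h'
  ext <;> simp <;> omega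

lemma pos_ne_neg (θ : List ℤ) {l : ℕ} (hl : l ≠ 0) (i : ℕ) : pos θ l i ≠ neg θ l i := by
  simp [pos, neg]
  omega

/-! ### Freezing an independent variable -/

lemma lintegral_freeze {Ω E Ω' : Type*} [MeasurableSpace Ω] [MeasurableSpace E]
    [MeasurableSpace Ω'] {μ : Measure Ω} [IsProbabilityMeasure μ] {Z : Ω → E} {W : Ω → Ω'}
    (hZ : Measurable Z) (hW : Measurable W) (h : IndepFun Z W μ) {φ : E × Ω' → ℝ≥0∞}
    (hφ : Measurable φ) :
    ∫⁻ ω, φ (Z ω, W ω) ∂μ = ∫⁻ z, ∫⁻ ω, φ (z, W ω) ∂μ ∂(μ.map Z) := by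
  have : IsProbabilityMeasure (μ.map W) := Measure.isProbabilityMeasure_map hW.aemeasurable
  rw [← lintegral_map hφ (hZ.prodMk hW),
    (indepFun_iff_map_prod_eq_prod_map_map hZ.aemeasurable hW.aemeasurable).1 h,
    lintegral_prod _ hφ.aemeasurable]
  refine lintegral_congr fun z => ?_
  rw [lintegral_map (by fun_prop) hW]

/-- Fubini for a variable `Z` that depends on the coordinates in `S` and an integrand that depends
on the coordinates in a disjoint set `T`. -/
lemma lintegral_freeze_sig {Ω E : Type*} {mΩ : MeasurableSpace Ω} {mE : MeasurableSpace E}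
    {μ : Measure Ω} [IsProbabilityMeasure μ] {F : List ℤ → MeasurableSpace Ω}
    (hF : ∀ θ, F θ ≤ mΩ) (hind : iIndep F μ) {S T : Set (List ℤ)} (hST : Disjoint S T)
    {Z : Ω → E} (hZ : @Measurable Ω E (sig F S) mE Z) {φ : E × Ω → ℝ≥0∞}
    (hφ : @Measurable (E × Ω) ℝ≥0∞ (mE.prod (sig F T)) _ φ) :
    ∫⁻ ω, φ (Z ω, ω) ∂μ = ∫⁻ z, ∫⁻ ω, φ (z, ω) ∂μ ∂(μ.map Z) := by
  have hind' := indep_iSup_of_disjoint hF hind hST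
  refine @lintegral_freeze Ω E Ω mΩ mE (sig F T) μ _ Z id (hZ.mono (sig_le hF S) le_rfl)
    (fun s hs => sig_le hF T s hs) ?_ φ hφ
  rw [@IndepFun_iff_Indep]
  refine indep_of_indep_of_le_left (indep_of_indep_of_le_right hind' ?_) hZ.comap_le
  rw [MeasurableSpace.comap_id]

lemma prod_measurable_mono {Ω E H : Type*} {mE : MeasurableSpace E} {mH : MeasurableSpace H}
    {m m' : MeasurableSpace Ω} (h : m ≤ m') {φ : E × Ω → H}
    (hφ : @Measurable (E × Ω) H (mE.prod m) mH φ) :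
    @Measurable (E × Ω) H (mE.prod m') mH φ := by
  refine hφ.mono ?_ le_rfl
  exact sup_le_sup le_rfl (MeasurableSpace.comap_mono h)

lemma prod_measurable_section {Ω E H : Type*} {mE : MeasurableSpace E} {mH : MeasurableSpace H}
    {m : MeasurableSpace Ω} {φ : E × Ω → H}
    (hφ : @Measurable (E × Ω) H (mE.prod m) mH φ) (z : E) :
    Measurable fun ω => φ (z, ω) := hφ.comp measurable_prodMk_left

/-- The law of `φ (Z, ω)` is determined by the law of `Z` and the laws of the sections of `φ`,
if `Z` and the sections of `φ` depend on disjoint sets of coordinates. -/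
lemma map_freeze_eq {Ω E H : Type*} {mΩ : MeasurableSpace Ω} {mE : MeasurableSpace E}
    {mH : MeasurableSpace H}
    {μ : Measure Ω} [IsProbabilityMeasure μ] {F : List ℤ → MeasurableSpace Ω}
    (hF : ∀ θ, F θ ≤ mΩ) (hind : iIndep F μ) {S T S' T' : Set (List ℤ)} (hST : Disjoint S T)
    (hST' : Disjoint S' T')
    {Z Z' : Ω → E} (hZ : @Measurable Ω E (sig F S) mE Z) (hZ' : @Measurable Ω E (sig F S') mE Z')
    (hZZ : μ.map Z = μ.map Z') {φ φ' : E × Ω → H}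
    (hφ : @Measurable (E × Ω) H (mE.prod (sig F T)) _ φ)
    (hφ' : @Measurable (E × Ω) H (mE.prod (sig F T')) _ φ')
    (hlaw : ∀ z, μ.map (fun ω => φ (z, ω)) = μ.map (fun ω => φ' (z, ω))) :
    μ.map (fun ω => φ (Z ω, ω)) = μ.map (fun ω => φ' (Z' ω, ω)) := by
  have key : ∀ {S T : Set (List ℤ)} {Z : Ω → E} {φ : E × Ω → H}, Disjoint S T →
      @Measurable Ω E (sig F S) mE Z → @Measurable (E × Ω) H (mE.prod (sig F T)) _ φ →
      ∀ B, MeasurableSet B → μ.map (fun ω => φ (Z ω, ω)) B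
        = ∫⁻ z, μ.map (fun ω => φ (z, ω)) B ∂(μ.map Z) := by
    intro S T Z φ hST hZ hφ B hB
    have hφm : Measurable φ := prod_measurable_mono (sig_le hF T) hφ
    have hZm : Measurable Z := hZ.mono (sig_le hF S) le_rfl
    have h1 := lintegral_freeze_sig hF hind hST hZ
      (φ := fun p => B.indicator 1 (φ p)) ((measurable_one.indicator hB).comp hφ)
    rw [← lintegral_indicator_one hB, lintegral_map (measurable_one.indicator hB) (by fun_prop), h1]
    refine lintegral_congr fun z => ?_
    rw [← lintegral_indicator_one hB, lintegral_map (measurable_one.indicator hB) (by fun_prop)]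
  ext B hB
  rw [key hST hZ hφ B hB, key hST' hZ' hφ' B hB, hZZ]
  exact lintegral_congr fun z => by rw [hlaw]

/-- The law of a pair with independent components is determined by the two marginals. -/
lemma map_pair_eq {Ω H H' : Type*} {mΩ : MeasurableSpace Ω} {mH : MeasurableSpace H}
    {mH' : MeasurableSpace H'}
    {μ : Measure Ω} [IsProbabilityMeasure μ] {F : List ℤ → MeasurableSpace Ω}
    (hF : ∀ θ, F θ ≤ mΩ) (hind : iIndep F μ) {S T S' T' : Set (List ℤ)} (hST : Disjoint S T)
    (hST' : Disjoint S' T') {U U' : Ω → H} {W W' : Ω → H'}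
    (hU : @Measurable Ω H (sig F S) mH U) (hU' : @Measurable Ω H (sig F S') mH U')
    (hW : @Measurable Ω H' (sig F T) mH' W) (hW' : @Measurable Ω H' (sig F T') mH' W')
    (hUU : μ.map U = μ.map U') (hWW : μ.map W = μ.map W') :
    μ.map (fun ω => (U ω, W ω)) = μ.map (fun ω => (U' ω, W' ω)) := by
  have key : ∀ {S T : Set (List ℤ)} {U : Ω → H} {W : Ω → H'}, Disjoint S T →
      @Measurable Ω H (sig F S) mH U → @Measurable Ω H' (sig F T) mH' W →
      μ.map (fun ω => (U ω, W ω)) = (μ.map U).prod (μ.map W) := by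
    intro S T U W hST hU hW
    have hUm : Measurable U := hU.mono (sig_le hF _) le_rfl
    have hWm : Measurable W := hW.mono (sig_le hF _) le_rfl
    refine (indepFun_iff_map_prod_eq_prod_map_map hUm.aemeasurable hWm.aemeasurable).1 ?_
    rw [IndepFun_iff_Indep]
    exact indep_of_indep_of_le_left (indep_of_indep_of_le_right
      (indep_iSup_of_disjoint hF hind hST) hW.comap_le) hU.comap_le
  rw [key hST hU hW, key hST' hU' hW', hUU, hWW]

/-- The law of a finite sum of random fields that depend on pairwise disjoint blocks of coordinates
is determined by the laws of the summands. -/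
lemma map_sum_eq {Ω I κ : Type*} {mΩ : MeasurableSpace Ω}
    {μ : Measure Ω} [IsProbabilityMeasure μ] {F : List ℤ → MeasurableSpace Ω}
    (hF : ∀ θ, F θ ≤ mΩ) (hind : iIndep F μ) {S S' : I → Set (List ℤ)}
    (hS : Pairwise fun p q => Disjoint (S p) (S q))
    (hS' : Pairwise fun p q => Disjoint (S' p) (S' q))
    {U U' : I → Ω → κ → ℝ}
    (hU : ∀ p, @Measurable Ω (κ → ℝ) (sig F (S p)) _ (U p))
    (hU' : ∀ p, @Measurable Ω (κ → ℝ) (sig F (S' p)) _ (U' p))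
    (hUU : ∀ p, μ.map (U p) = μ.map (U' p)) (s : Finset I) :
    μ.map (fun ω => ∑ p ∈ s, U p ω) = μ.map (fun ω => ∑ p ∈ s, U' p ω) := by
  classical
  induction s using Finset.induction_on with
  | empty => simp
  | insert p s hp ih =>
    have hm : ∀ {S : I → Set (List ℤ)} {U : I → Ω → κ → ℝ},
        (∀ p, @Measurable Ω (κ → ℝ) (sig F (S p)) _ (U p)) →
        @Measurable Ω (κ → ℝ) (sig F (⋃ q ∈ s, S q)) _ (fun ω => ∑ p ∈ s, U p ω) := by
      intro S U hU
      rw [@measurable_pi_iff]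
      intro k
      simp only [Finset.sum_apply]
      refine Finset.measurable_fun_sum _ fun q hq => ?_
      have := (hU q).mono (sig_mono F (Set.subset_biUnion_of_mem (u := S) hq)) le_rfl
      rw [@measurable_pi_iff] at this
      exact this k
    have hd : ∀ {S : I → Set (List ℤ)}, (Pairwise fun p q => Disjoint (S p) (S q)) →
        Disjoint (S p) (⋃ q ∈ s, S q) := by
      intro S hS
      simp only [Set.disjoint_iUnion_right]
      exact fun q hq => hS (by rintro rfl; exact hp hq)
    have h := map_pair_eq hF hind (hd hS) (hd hS') (hU p) (hU' p) (hm hU) (hm hU') (hUU p) ih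
    have hadd : Measurable fun r : (κ → ℝ) × (κ → ℝ) => r.1 + r.2 := by
      rw [measurable_pi_iff]
      intro k
      simp only [Pi.add_apply]
      fun_prop
    have h2 := congrArg (Measure.map fun r : (κ → ℝ) × (κ → ℝ) => r.1 + r.2) h
    rw [Measure.map_map hadd, Measure.map_map hadd] at h2
    · simpa only [Finset.sum_insert hp] using! h2
    · exact ((hU' p).mono (sig_le hF _) le_rfl).prodMk ((hm hU').mono (sig_le hF _) le_rfl)
    · exact ((hU p).mono (sig_le hF _) le_rfl).prodMk ((hm hU).mono (sig_le hF _) le_rfl)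

/-! ### Measurability and laws of the approximations -/

/-- The summand `(l, i)` in the recursion for `V n θ`: the difference of consecutive
approximations evaluated at the common random point `X (θ, l, i + 1)`. -/
def incr {𝕏 Ω A : Type*} (f : 𝕏 → (A → ℝ) → ℝ) (X : List ℤ → 𝕏 → A → Ω → 𝕏)
    (V : ℕ → List ℤ → 𝕏 → A → Ω → ℝ) (θ : List ℤ) (l i : ℕ) (x : 𝕏) (a : A) (ω : Ω) : ℝ :=
  f (X (pos θ l i) x a ω) (fun b => V l (pos θ l i) (X (pos θ l i) x a ω) b ω)
    - if l = 0 then 0 else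
      f (X (pos θ l i) x a ω) (fun b => V (l - 1) (neg θ l i) (X (pos θ l i) x a ω) b ω)

/-- The MLFP setting: independent σ-algebras `F θ`, identically distributed random fields `X θ`
adapted to them, and approximations `V n θ` satisfying the multilevel recursion. -/
structure Setting {𝕏 : Type*} [mX : MeasurableSpace 𝕏] {Ω : Type*} [mΩ : MeasurableSpace Ω]
    (μ : Measure Ω) {A : Type*} (M : ℕ) (F : List ℤ → MeasurableSpace Ω)
    (f : 𝕏 → (A → ℝ) → ℝ) (X : List ℤ → 𝕏 → A → Ω → 𝕏)
    (V : ℕ → List ℤ → 𝕏 → A → Ω → ℝ) : Prop where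
  le : ∀ θ, F θ ≤ mΩ
  indep : iIndep F μ
  f_meas : Measurable fun p : 𝕏 × (A → ℝ) => f p.1 p.2
  X_meas : ∀ θ : List ℤ, @Measurable (𝕏 × Ω) (A → 𝕏) (mX.prod (F θ)) MeasurableSpace.pi
    fun p => fun a => X θ p.1 a p.2
  X_id : ∀ θ η : List ℤ, Measure.map (fun ω => fun p : 𝕏 × A => X θ p.1 p.2 ω) μ
    = Measure.map (fun ω => fun p : 𝕏 × A => X η p.1 p.2 ω) μ
  V_eq : ∀ (n : ℕ) (θ : List ℤ) (x : 𝕏) (a : A) (ω : Ω), V n θ x a ω =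
    ∑ l ∈ Finset.range n, ((M : ℝ) ^ (n - l))⁻¹ *
      ∑ i ∈ Finset.range (M ^ (n - l)), incr f X V θ l i x a ω

section
variable {𝕏 : Type*} [mX : MeasurableSpace 𝕏] {Ω : Type*} [mΩ : MeasurableSpace Ω]
    {μ : Measure Ω} {A : Type u} {M : ℕ}
    {F : List ℤ → MeasurableSpace Ω} {f : 𝕏 → (A → ℝ) → ℝ} {X : List ℤ → 𝕏 → A → Ω → 𝕏}
    {V : ℕ → List ℤ → 𝕏 → A → Ω → ℝ}

lemma eval_meas {𝕏 A Ω' : Type*} [MeasurableSpace 𝕏] [MeasurableSpace Ω']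
    {f : 𝕏 → (A → ℝ) → ℝ} (hf : Measurable fun p : 𝕏 × (A → ℝ) => f p.1 p.2)
    {E : Type*} [MeasurableSpace E] {z : E × Ω' → 𝕏} (hz : Measurable z)
    {U : 𝕏 → A → Ω' → ℝ} (hU : Measurable fun p : 𝕏 × Ω' => fun a => U p.1 a p.2) :
    Measurable fun p : E × Ω' => f (z p) (fun b => U (z p) b p.2) :=
  hf.comp (hz.prodMk (hU.comp (hz.prodMk measurable_snd)))

lemma Setting.V_zero (h : Setting μ M F f X V) (θ : List ℤ) (x : 𝕏) (a : A) (ω : Ω) :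
    V 0 θ x a ω = 0 := by simp [h.V_eq 0]

lemma Setting.X_joint (h : Setting μ M F f X V) {θ : List ℤ} {S : Set (List ℤ)} (hθ : θ ∈ S)
    (a : A) : @Measurable (𝕏 × Ω) 𝕏 (mX.prod (sig F S)) _ fun p => X θ p.1 a p.2 := by
  have h1 := prod_measurable_mono (le_sig F hθ) (h.X_meas θ)
  rw [@measurable_pi_iff] at h1
  exact h1 a

/-- `V n θ` is a jointly measurable function of the point and of the coordinates indexed by strict
descendants of `θ`. -/
lemma Setting.V_joint (h : Setting μ M F f X V) (n : ℕ) : ∀ θ : List ℤ,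
    @Measurable (𝕏 × Ω) (A → ℝ) (mX.prod (sig F (desc θ))) _ fun p a => V n θ p.1 a p.2 := by
  induction n using Nat.strong_induction_on with
  | _ n ih =>
    intro θ
    rw [@measurable_pi_iff]
    intro a
    simp only [h.V_eq n]
    refine Finset.measurable_fun_sum _ fun l hl => ?_
    have hl : l < n := Finset.mem_range.1 hl
    refine Measurable.const_mul ?_ _
    refine Finset.measurable_fun_sum _ fun i _ => ?_
    unfold incr
    have hb := block_subset_desc θ l i
    have hX := h.X_joint (hb (pos_mem_block θ l i)) a
    refine Measurable.sub ?_ ?_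
    · exact @eval_meas 𝕏 A Ω mX (sig F (desc θ)) f h.f_meas 𝕏 mX _ hX _
        (prod_measurable_mono (sig_mono F ((desc_pos_subset θ l i).trans hb)) (ih l hl _))
    · by_cases hl0 : l = 0
      · simp only [hl0, if_true]
        exact measurable_const
      · simp only [hl0, if_false]
        exact @eval_meas 𝕏 A Ω mX (sig F (desc θ)) f h.f_meas 𝕏 mX _ hX _
          (prod_measurable_mono (sig_mono F ((desc_neg_subset θ l i).trans hb))
            (ih (l - 1) (by omega) _))

lemma Setting.incr_meas (h : Setting μ M F f X V) (θ : List ℤ) (l i : ℕ) (x : 𝕏) (a : A) :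
    @Measurable Ω ℝ (sig F (block θ l i)) _ (incr f X V θ l i x a) := by
  have hX := h.X_joint (pos_mem_block θ l i) a
  have h1 := @eval_meas 𝕏 A Ω mX (sig F (block θ l i)) f h.f_meas 𝕏 mX _ hX _
        (prod_measurable_mono (sig_mono F (desc_pos_subset θ l i)) (h.V_joint l _))
  have h2 := @eval_meas 𝕏 A Ω mX (sig F (block θ l i)) f h.f_meas 𝕏 mX _ hX _
        (prod_measurable_mono (sig_mono F (desc_neg_subset θ l i)) (h.V_joint (l - 1) _))
  refine Measurable.sub (prod_measurable_section h1 x) ?_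
  by_cases hl0 : l = 0
  · simp only [hl0, if_true]
    exact measurable_const
  · simp only [hl0, if_false]
    exact prod_measurable_section h2 x

lemma Setting.X_sec (h : Setting μ M F f X V) (θ : List ℤ) (x : 𝕏) (a : A) :
    @Measurable Ω 𝕏 (sig F {θ}) _ (X θ x a) :=
  prod_measurable_section (h.X_joint (Set.mem_singleton θ) a) x

lemma Setting.X_sec' (h : Setting μ M F f X V) (θ : List ℤ) (x : 𝕏) (a : A) :
    Measurable (X θ x a) := (h.X_sec θ x a).mono (sig_le h.le _) le_rfl

lemma Setting.map_X (h : Setting μ M F f X V) {J : Type*} (y : J → 𝕏 × A) (θ η : List ℤ) :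
    μ.map (fun ω j => X θ (y j).1 (y j).2 ω) = μ.map (fun ω j => X η (y j).1 (y j).2 ω) := by
  have hg : Measurable fun (z : 𝕏 × A → 𝕏) j => z (y j) := by
    rw [measurable_pi_iff]
    exact fun j => measurable_pi_apply _
  have hm : ∀ θ, Measurable fun ω => fun p : 𝕏 × A => X θ p.1 p.2 ω := fun θ => by
    rw [measurable_pi_iff]
    exact fun p => h.X_sec' θ p.1 p.2
  have h1 := congrArg (Measure.map fun (z : 𝕏 × A → 𝕏) j => z (y j)) (h.X_id θ η)
  rwa [Measure.map_map hg (hm θ), Measure.map_map hg (hm η)] at h1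

lemma Setting.map_X_one (h : Setting μ M F f X V) (x : 𝕏) (a : A) (θ η : List ℤ) :
    μ.map (X θ x a) = μ.map (X η x a) := by
  have hm : ∀ θ, Measurable fun ω => fun _ : Unit => X θ x a ω := fun θ => by
    rw [measurable_pi_iff]
    exact fun p => h.X_sec' θ x a
  have h1 := congrArg (Measure.map fun z : Unit → 𝕏 => z ()) (h.map_X (fun _ : Unit => (x, a)) θ η)
  rwa [Measure.map_map (measurable_pi_apply _) (hm θ),
    Measure.map_map (measurable_pi_apply _) (hm η)] at h1

lemma Setting.V_sec (h : Setting μ M F f X V) (n : ℕ) (θ : List ℤ) {J : Type*} (z : J → 𝕏) :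
    @Measurable Ω (J → A → ℝ) (sig F (desc θ)) _ fun ω j a => V n θ (z j) a ω := by
  rw [@measurable_pi_iff]
  exact fun j => prod_measurable_section (h.V_joint n θ) (z j)

variable [IsProbabilityMeasure μ]

/-- The law of the field of increments does not depend on `θ` and `i`, provided that this is the
case for the laws of the approximations of the two levels involved. -/
lemma Setting.map_incr (h : Setting μ M F f X V) (l : ℕ)
    (ih : ∀ k ≤ l, ∀ (J : Type u) (z : J → 𝕏) (θ η : List ℤ),
      μ.map (fun ω j a => V k θ (z j) a ω) = μ.map (fun ω j a => V k η (z j) a ω))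
    {K : Type u} (y : K → 𝕏) (θ η : List ℤ) (i : ℕ) :
    μ.map (fun ω (p : K × A) => incr f X V θ l i (y p.1) p.2 ω)
      = μ.map (fun ω (p : K × A) => incr f X V η l i (y p.1) p.2 ω) := by
  have hd : ∀ θ, Disjoint {pos θ l i} (desc (pos θ l i) ∪ desc (neg θ l i)) := fun θ => by
    rw [Set.disjoint_singleton_left, Set.mem_union, not_or]
    exact ⟨self_notMem_desc _, notMem_desc_of_length (by simp)⟩
  have hZ : ∀ θ, @Measurable Ω (K × A → 𝕏) (sig F {pos θ l i}) _
      fun ω p => X (pos θ l i) (y p.1) p.2 ω := fun θ => by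
    rw [@measurable_pi_iff]
    exact fun p => h.X_sec _ _ _
  -- The increment as a function of the random evaluation points `z` and the remaining randomness.
  let φ : List ℤ → (K × A → 𝕏) × Ω → K × A → ℝ := fun θ q p =>
    f (q.1 p) (fun b => V l (pos θ l i) (q.1 p) b q.2) - if l = 0 then 0 else
      f (q.1 p) (fun b => V (l - 1) (neg θ l i) (q.1 p) b q.2)
  have hφ : ∀ θ, @Measurable ((K × A → 𝕏) × Ω) (K × A → ℝ)
      (MeasurableSpace.pi.prod (sig F (desc (pos θ l i) ∪ desc (neg θ l i)))) _ (φ θ) := fun θ => by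
    rw [@measurable_pi_iff]
    intro p
    have hz : @Measurable ((K × A → 𝕏) × Ω) 𝕏
      (MeasurableSpace.pi.prod (sig F (desc (pos θ l i) ∪ desc (neg θ l i)))) _ (fun q => q.1 p) :=
      (measurable_pi_apply p).comp measurable_fst
    refine Measurable.sub ?_ ?_
    · exact @eval_meas 𝕏 A Ω mX (sig F _) f h.f_meas (K × A → 𝕏) _ _ hz _
        (prod_measurable_mono (sig_mono F Set.subset_union_left) (h.V_joint l _))
    · by_cases hl0 : l = 0
      · simp only [hl0, if_true]
        exact measurable_const
      · simp only [hl0, if_false]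
        exact @eval_meas 𝕏 A Ω mX (sig F _) f h.f_meas (K × A → 𝕏) _ _ hz _
          (prod_measurable_mono (sig_mono F Set.subset_union_right) (h.V_joint (l - 1) _))
  refine map_freeze_eq h.le h.indep (hd θ) (hd η) (hZ θ) (hZ η)
    (h.map_X (fun p : K × A => (y p.1, p.2)) _ _) (hφ θ) (hφ η) fun z => ?_
  by_cases hl0 : l = 0
  · subst hl0
    simp [φ, h.V_zero]
  · have hpair := map_pair_eq h.le h.indep
      (disjoint_desc (pos_ne_neg θ hl0 i) (by simp)) (disjoint_desc (pos_ne_neg η hl0 i) (by simp))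
      (h.V_sec l (pos θ l i) z) (h.V_sec l (pos η l i) z)
      (h.V_sec (l - 1) (neg θ l i) z) (h.V_sec (l - 1) (neg η l i) z)
      (ih l le_rfl _ z _ _) (ih (l - 1) (by omega) _ z _ _)
    let Ψ : (K × A → A → ℝ) × (K × A → A → ℝ) → K × A → ℝ := fun r p =>
      f (z p) (r.1 p) - f (z p) (r.2 p)
    have hΨ : Measurable Ψ := by
      rw [measurable_pi_iff]
      intro p
      refine Measurable.sub ?_ ?_
      · exact h.f_meas.comp (measurable_const.prodMk ((measurable_pi_apply p).comp measurable_fst))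
      · exact h.f_meas.comp (measurable_const.prodMk ((measurable_pi_apply p).comp measurable_snd))
    have hm : ∀ k θ, Measurable fun ω (j : K × A) a => V k θ (z j) a ω := fun k θ =>
      (h.V_sec k θ z).mono (sig_le h.le _) le_rfl
    have h2 := congrArg (Measure.map Ψ) hpair
    rw [Measure.map_map hΨ ((hm _ _).prodMk (hm _ _)),
      Measure.map_map hΨ ((hm _ _).prodMk (hm _ _))] at h2
    simp only [φ, hl0, if_false]
    exact h2

/-- The law of the field `V n θ` along an arbitrary family of points does not depend on `θ`. -/
lemma Setting.map_V (h : Setting μ M F f X V) (n : ℕ) : ∀ (K : Type u) (y : K → 𝕏) (θ η : List ℤ),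
    μ.map (fun ω k a => V n θ (y k) a ω) = μ.map (fun ω k a => V n η (y k) a ω) := by
  induction n using Nat.strong_induction_on with
  | _ n ih =>
    intro K y θ η
    let s : Finset (Σ _ : ℕ, ℕ) := (Finset.range n).sigma fun l => Finset.range (M ^ (n - l))
    -- Levels `≥ n` do not occur in the sum; they are set to zero to make the family total.
    let U : List ℤ → (Σ _ : ℕ, ℕ) → Ω → K × A → ℝ := fun θ q ω p =>
      if q.1 < n then ((M : ℝ) ^ (n - q.1))⁻¹ * incr f X V θ q.1 q.2 (y p.1) p.2 ω else 0
    have hU : ∀ θ q, @Measurable Ω (K × A → ℝ) (sig F (block θ q.1 q.2)) _ (U θ q) := by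
      intro θ q
      rw [@measurable_pi_iff]
      intro p
      by_cases hq : q.1 < n
      · simp only [U, hq, if_true]
        exact (h.incr_meas _ _ _ _ _).const_mul _
      · simp only [U, hq, if_false]
        exact measurable_const
    have hUU : ∀ q, μ.map (U θ q) = μ.map (U η q) := by
      intro q
      by_cases hq : q.1 < n
      · have h1 := h.map_incr q.1 (fun k hk => ih k (by omega)) y θ η q.2
        have hc : Measurable fun (r : K × A → ℝ) p => ((M : ℝ) ^ (n - q.1))⁻¹ * r p := by
          rw [measurable_pi_iff]
          exact fun p => (measurable_pi_apply p).const_mul _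
        have hm : ∀ θ, Measurable fun ω (p : K × A) => incr f X V θ q.1 q.2 (y p.1) p.2 ω := by
          intro θ
          rw [measurable_pi_iff]
          exact fun p => (h.incr_meas _ _ _ _ _).mono (sig_le h.le _) le_rfl
        have h2 := congrArg (Measure.map fun (r : K × A → ℝ) p => ((M : ℝ) ^ (n - q.1))⁻¹ * r p) h1
        rw [Measure.map_map hc (hm θ), Measure.map_map hc (hm η)] at h2
        simp only [U, hq, if_true]
        exact h2
      · simp [U, hq]
    have hS : ∀ θ, Pairwise fun p q : (Σ _ : ℕ, ℕ) =>
        Disjoint (block θ p.1 p.2) (block θ q.1 q.2) := by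
      intro θ p q hpq
      refine disjoint_block θ fun he => hpq ?_
      rcases p with ⟨p1, p2⟩
      rcases q with ⟨q1, q2⟩
      simp_all
    have h3 := map_sum_eq h.le h.indep (hS θ) (hS η) (hU θ) (hU η) hUU s
    have hV : ∀ θ, (fun ω k a => V n θ (y k) a ω)
        = (fun (r : K × A → ℝ) k a => r (k, a)) ∘ fun ω => ∑ p ∈ s, U θ p ω := by
      intro θ
      funext ω k a
      simp only [Function.comp, Finset.sum_apply, h.V_eq n, s, Finset.sum_sigma, Finset.mul_sum]
      refine Finset.sum_congr rfl fun l hl => Finset.sum_congr rfl fun i _ => ?_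
      simp only [U, Finset.mem_range.1 hl, if_true]
    have hcur : Measurable fun (r : K × A → ℝ) k a => r (k, a) := by
      rw [measurable_pi_iff]
      intro k
      rw [measurable_pi_iff]
      exact fun a => measurable_pi_apply _
    have hm : ∀ θ, Measurable fun ω => ∑ p ∈ s, U θ p ω := by
      intro θ
      rw [measurable_pi_iff]
      intro p
      simp only [Finset.sum_apply]
      refine Finset.measurable_fun_sum _ fun q _ => ?_
      have := (hU θ q).mono (sig_le h.le _) le_rfl
      exact (measurable_pi_apply p).comp this
    rw [hV, hV, ← Measure.map_map hcur (hm θ), ← Measure.map_map hcur (hm η), h3]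

/-- The law of `f (X η, V n θ (X η))` does not depend on the indices, as long as `X η` is
independent of `V n θ`. -/
lemma Setting.map_eval (h : Setting μ M F f X V) (n : ℕ) {θ η θ' η' : List ℤ} (hη : η ∉ desc θ)
    (hη' : η' ∉ desc θ') (x : 𝕏) (a : A) :
    μ.map (fun ω => f (X η x a ω) (fun b => V n θ (X η x a ω) b ω))
      = μ.map (fun ω => f (X η' x a ω) (fun b => V n θ' (X η' x a ω) b ω)) := by
  have hφ : ∀ θ, @Measurable (𝕏 × Ω) ℝ (mX.prod (sig F (desc θ))) _
      (fun q => f q.1 (fun b => V n θ q.1 b q.2)) := fun θ =>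
    @eval_meas 𝕏 A Ω mX (sig F (desc θ)) f h.f_meas 𝕏 mX _ measurable_fst _ (h.V_joint n θ)
  refine map_freeze_eq h.le h.indep (Set.disjoint_singleton_left.2 hη)
    (Set.disjoint_singleton_left.2 hη') (h.X_sec η x a) (h.X_sec η' x a)
    (h.map_X_one x a η η') (hφ θ) (hφ θ') fun z => ?_
  have h1 := h.map_V n PUnit (fun _ => z) θ θ'
  have hg : Measurable fun r : PUnit.{u + 1} → A → ℝ => f z (r PUnit.unit) :=
    h.f_meas.comp (measurable_const.prodMk (measurable_pi_apply _))
  have h2 := congrArg (Measure.map fun r : PUnit.{u + 1} → A → ℝ => f z (r PUnit.unit)) h1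
  rwa [Measure.map_map hg ((h.V_sec n θ _).mono (sig_le h.le _) le_rfl),
    Measure.map_map hg ((h.V_sec n θ' _).mono (sig_le h.le _) le_rfl)] at h2

end

/-! ### Second moments -/

lemma eLpNorm_two_le_iff {Ω E : Type*} [MeasurableSpace Ω] {μ : Measure Ω} [NormedAddCommGroup E]
    {g : Ω → E} {C : ℝ} (hC : 0 ≤ C) :
    eLpNorm g 2 μ ≤ ENNReal.ofReal C
      ↔ ∫⁻ ω, ENNReal.ofReal (‖g ω‖ ^ 2) ∂μ ≤ ENNReal.ofReal (C ^ 2) := by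
  have h : eLpNorm g 2 μ ^ 2 = ∫⁻ ω, ENNReal.ofReal (‖g ω‖ ^ 2) ∂μ := by
    have h1 := eLpNorm_nnreal_pow_eq_lintegral (μ := μ) (f := g) (p := 2) two_ne_zero
    norm_num at h1
    simpa [ENNReal.ofReal_pow] using h1
  rw [← h, ENNReal.ofReal_pow hC]
  exact (ENNReal.pow_le_pow_left_iff two_ne_zero).symm

/-- The Monte Carlo rate: the average of `N` pairwise independent variables with common mean `m`
and `L²`-norms at most `K` has `L²`-distance at most `K / √N` to `m`. -/
lemma eLpNorm_average_le {Ω : Type*} [MeasurableSpace Ω] {μ : Measure Ω} [IsProbabilityMeasure μ]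
    {N : ℕ} (hN : 0 < N) {Y : ℕ → Ω → ℝ} {K m : ℝ} (hK : 0 ≤ K) (hY : ∀ i, Measurable (Y i))
    (hYK : ∀ i, eLpNorm (Y i) 2 μ ≤ ENNReal.ofReal K) (hm : ∀ i, ∫ ω, Y i ω ∂μ = m)
    (hind : Pairwise fun i j => IndepFun (Y i) (Y j) μ) :
    eLpNorm (fun ω => m - (N : ℝ)⁻¹ * ∑ i ∈ Finset.range N, Y i ω) 2 μ
      ≤ ENNReal.ofReal ((√N)⁻¹ * K) := by
  have hL : ∀ i, MemLp (Y i) 2 μ := fun i =>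
    ⟨(hY i).aestronglyMeasurable, (hYK i).trans_lt ENNReal.ofReal_lt_top⟩
  have hvar : ∀ i, Var[Y i; μ] ≤ K ^ 2 := by
    intro i
    refine (variance_le_expectation_sq (hL i).1).trans ?_
    have h1 := (eLpNorm_two_le_iff hK).1 (hYK i)
    rw [← ofReal_integral_eq_lintegral_ofReal (by simpa using (hL i).integrable_sq)
      (.of_forall fun _ => by positivity), ENNReal.ofReal_le_ofReal_iff (by positivity)] at h1
    simpa using h1
  have hS : MemLp (∑ i ∈ Finset.range N, Y i) 2 μ := memLp_finsetSum' _ fun i _ => hL i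
  have hES : ∫ ω, (∑ i ∈ Finset.range N, Y i) ω ∂μ = N * m := by
    simp only [Finset.sum_apply]
    rw [integral_finsetSum _ fun i _ => (hL i).integrable (by norm_num)]
    simp [hm]
  have hvS : Var[∑ i ∈ Finset.range N, Y i; μ] ≤ N * K ^ 2 := by
    rw [IndepFun.variance_sum (fun i _ => hL i) fun i _ j _ hij => hind hij]
    exact (Finset.sum_le_sum fun i _ => hvar i).trans (by simp)
  have hN0 : (0 : ℝ) < N := by exact_mod_cast hN
  rw [eLpNorm_two_le_iff (by positivity)]
  have h2 : ∀ ω, ENNReal.ofReal (‖m - (N : ℝ)⁻¹ * ∑ i ∈ Finset.range N, Y i ω‖ ^ 2)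
      = ENNReal.ofReal (((N : ℝ)⁻¹) ^ 2) * ENNReal.ofReal (((∑ i ∈ Finset.range N, Y i) ω
        - ∫ ω, (∑ i ∈ Finset.range N, Y i) ω ∂μ) ^ 2) := by
    intro ω
    rw [← ENNReal.ofReal_mul (by positivity), hES, Finset.sum_apply, Real.norm_eq_abs, sq_abs]
    congr 1
    field_simp
    ring
  simp only [h2]
  rw [lintegral_const_mul' _ _ ENNReal.ofReal_ne_top, ← evariance_eq_lintegral_ofReal,
    ← ofReal_variance hS, ← ENNReal.ofReal_mul (by positivity)]
  refine ENNReal.ofReal_le_ofReal ?_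
  calc ((N : ℝ)⁻¹) ^ 2 * Var[∑ i ∈ Finset.range N, Y i; μ]
      ≤ ((N : ℝ)⁻¹) ^ 2 * (N * K ^ 2) := by gcongr
    _ = ((√N)⁻¹ * K) ^ 2 := by
      rw [mul_pow, inv_pow, inv_pow, Real.sq_sqrt hN0.le]
      field_simp

/-- The sup-norm is bounded by the sum of the absolute values of the coordinates, in `L²`. -/
lemma eLpNorm_pi_le {Ω A : Type*} [MeasurableSpace Ω] {μ : Measure Ω} [Fintype A]
    {g : A → Ω → ℝ} (hg : ∀ a, Measurable (g a)) {C : ℝ}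
    (h : ∀ a, eLpNorm (g a) 2 μ ≤ ENNReal.ofReal C) :
    eLpNorm (fun ω a => g a ω) 2 μ ≤ ENNReal.ofReal (Fintype.card A * C) := by
  have h1 : eLpNorm (fun ω a => g a ω) 2 μ ≤ eLpNorm (∑ a, fun ω => ‖g a ω‖) 2 μ := by
    refine eLpNorm_mono_real fun ω => ?_
    rw [Finset.sum_apply]
    exact (pi_norm_le_iff_of_nonneg (by positivity)).2 fun a =>
      Finset.single_le_sum (f := fun a => ‖g a ω‖) (fun _ _ => norm_nonneg _) (Finset.mem_univ a)
  refine h1.trans ((eLpNorm_sum_le (fun a _ => (hg a).norm.aestronglyMeasurable)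
    (by norm_num)).trans ?_)
  calc ∑ a, eLpNorm (fun ω => ‖g a ω‖) 2 μ ≤ ∑ _a : A, ENNReal.ofReal C :=
        Finset.sum_le_sum fun a _ => by rw [eLpNorm_norm]; exact h a
    _ = ENNReal.ofReal (Fintype.card A * C) := by
        rw [ENNReal.ofReal_mul (by positivity)]
        simp

lemma abs_integral_le_of_eLpNorm {Ω : Type*} [MeasurableSpace Ω] {μ : Measure Ω}
    [IsProbabilityMeasure μ] {g : Ω → ℝ} (hg : Measurable g) {C : ℝ} (hC : 0 ≤ C)
    (h : eLpNorm g 2 μ ≤ ENNReal.ofReal C) : |∫ ω, g ω ∂μ| ≤ C := by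
  have h1 := (enorm_integral_le_lintegral_enorm (μ := μ) g).trans
    ((eLpNorm_one_eq_lintegral_enorm (f := g) (μ := μ)).symm.le.trans
    ((eLpNorm_le_eLpNorm_of_exponent_le (p := 1) (q := 2) (by norm_num)
      hg.aestronglyMeasurable).trans h))
  rw [Real.enorm_eq_ofReal_abs] at h1
  exact (ENNReal.ofReal_le_ofReal_iff hC).1 h1

/-- The regularity hypotheses: `f` is `L`-Lipschitz in its second argument, `v` solves the fixed
point equation, and `f (·, 0)`, `v`, `w` have second moments along `X` controlled by the
weight `w`. -/
structure Moments {𝕏 : Type*} [MeasurableSpace 𝕏] {Ω : Type*} [MeasurableSpace Ω]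
    (μ : Measure Ω) {A : Type*} [Fintype A] (f : 𝕏 → (A → ℝ) → ℝ)
    (X : List ℤ → 𝕏 → A → Ω → 𝕏) (cf cv cw L : ℝ) (w : 𝕏 → ℝ) (v : 𝕏 → A → ℝ) : Prop where
  cf_nonneg : 0 ≤ cf
  cv_nonneg : 0 ≤ cv
  cw_nonneg : 0 ≤ cw
  L_nonneg : 0 ≤ L
  w_pos : ∀ x, 0 < w x
  w_meas : Measurable w
  v_meas : Measurable v
  lip : ∀ (x : 𝕏) (r s : A → ℝ), |f x r - f x s| ≤ L * ‖r - s‖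
  f_mom : ∀ x a, eLpNorm (fun ω => f (X [0] x a ω) 0) 2 μ ≤ ENNReal.ofReal (cf * w x)
  v_mom : ∀ x a, eLpNorm (fun ω => v (X [0] x a ω)) 2 μ ≤ ENNReal.ofReal (cv * w x)
  w_mom : ∀ x a, eLpNorm (fun ω => w (X [0] x a ω)) 2 μ ≤ ENNReal.ofReal (cw * w x)
  fix : ∀ x a, v x a = ∫ ω, f (X [0] x a ω) (v (X [0] x a ω)) ∂μ

section
variable {𝕏 : Type*} [mX : MeasurableSpace 𝕏] {Ω : Type*} [mΩ : MeasurableSpace Ω]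
    {μ : Measure Ω} {A : Type u} {M : ℕ}
    {F : List ℤ → MeasurableSpace Ω} {f : 𝕏 → (A → ℝ) → ℝ} {X : List ℤ → 𝕏 → A → Ω → 𝕏}
    {V : ℕ → List ℤ → 𝕏 → A → Ω → ℝ} {cf cv cw L : ℝ} {w : 𝕏 → ℝ} {v : 𝕏 → A → ℝ}

lemma Setting.eLpNorm_X (h : Setting μ M F f X V) {E : Type*} [NormedAddCommGroup E]
    [MeasurableSpace E] [OpensMeasurableSpace E] [SecondCountableTopology E]
    {g : 𝕏 → E} (hg : Measurable g) (x : 𝕏) (a : A) (θ η : List ℤ) :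
    eLpNorm (fun ω => g (X θ x a ω)) 2 μ = eLpNorm (fun ω => g (X η x a ω)) 2 μ := by
  have h1 : ∀ θ, eLpNorm (fun ω => g (X θ x a ω)) 2 μ = eLpNorm g 2 (μ.map (X θ x a)) := fun θ =>
    (eLpNorm_map_measure hg.aestronglyMeasurable (h.X_sec' θ x a).aemeasurable).symm
  rw [h1, h1, h.map_X_one x a θ η]

lemma Setting.eval_meas' (h : Setting μ M F f X V) (n : ℕ) (θ η : List ℤ) (x : 𝕏) (a : A) :
    Measurable fun ω => f (X η x a ω) (fun b => V n θ (X η x a ω) b ω) := by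
  have hV : Measurable fun p : 𝕏 × Ω => fun b => V n θ p.1 b p.2 :=
    prod_measurable_mono (sig_le h.le _) (h.V_joint n θ)
  exact h.f_meas.comp ((h.X_sec' η x a).prodMk (hV.comp ((h.X_sec' η x a).prodMk measurable_id)))

lemma Setting.v_eval_meas (h : Setting μ M F f X V) (hv : Measurable v) (η : List ℤ) (x : 𝕏)
    (a : A) : Measurable fun ω => f (X η x a ω) (v (X η x a ω)) :=
  h.f_meas.comp ((h.X_sec' η x a).prodMk (hv.comp (h.X_sec' η x a)))

lemma diff_meas {𝕏 A Ω' : Type*} [MeasurableSpace 𝕏] [MeasurableSpace Ω'] [Fintype A]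
    {v : 𝕏 → A → ℝ} (hv : Measurable v)
    {U : 𝕏 → A → Ω' → ℝ} (hU : Measurable fun p : 𝕏 × Ω' => fun a => U p.1 a p.2) :
    Measurable fun p : 𝕏 × Ω' => ENNReal.ofReal (‖v p.1 - fun b => U p.1 b p.2‖ ^ 2) :=
  (((hv.comp measurable_fst).sub hU).norm.pow_const 2).ennreal_ofReal

variable [Fintype A] [IsProbabilityMeasure μ]

/-- An `L²`-error bound for `V n θ` at deterministic points yields one at the random point `X η`
that is independent of `V n θ`; the factor `cw` is lost. -/
lemma Setting.eval_diff (h : Setting μ M F f X V) (hm : Moments μ f X cf cv cw L w v) {n : ℕ}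
    {θ η : List ℤ} (hη : η ∉ desc θ) {B : ℝ} (hB0 : 0 ≤ B)
    (hB : ∀ z, eLpNorm (fun ω => v z - fun b => V n θ z b ω) 2 μ ≤ ENNReal.ofReal (B * w z))
    (x : 𝕏) (a : A) :
    eLpNorm (fun ω => v (X η x a ω) - fun b => V n θ (X η x a ω) b ω) 2 μ
      ≤ ENNReal.ofReal (B * (cw * w x)) := by
  have hw := hm.w_pos
  have hcw := hm.cw_nonneg
  have hx := (hw x).le
  rw [eLpNorm_two_le_iff (by positivity)]
  have hφ : @Measurable (𝕏 × Ω) ℝ≥0∞ (mX.prod (sig F (desc θ))) _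
      (fun p => ENNReal.ofReal (‖v p.1 - fun b => V n θ p.1 b p.2‖ ^ 2)) :=
    @diff_meas 𝕏 A Ω mX (sig F (desc θ)) _ v hm.v_meas _ (h.V_joint n θ)
  rw [lintegral_freeze_sig h.le h.indep (Set.disjoint_singleton_left.2 hη) (h.X_sec η x a) hφ]
  calc _ ≤ ∫⁻ z, ENNReal.ofReal ((B * w z) ^ 2) ∂(μ.map (X η x a)) :=
        lintegral_mono fun z => (eLpNorm_two_le_iff (mul_nonneg hB0 (hw z).le)).1 (hB z)
    _ = ENNReal.ofReal (B ^ 2) * ∫⁻ ω, ENNReal.ofReal (‖w (X η x a ω)‖ ^ 2) ∂μ := by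
        rw [lintegral_map ((hm.w_meas.const_mul B).pow_const 2).ennreal_ofReal (h.X_sec' η x a),
          ← lintegral_const_mul' _ _ ENNReal.ofReal_ne_top]
        refine lintegral_congr fun ω => ?_
        rw [← ENNReal.ofReal_mul (by positivity), mul_pow, Real.norm_eq_abs, sq_abs]
    _ ≤ ENNReal.ofReal (B ^ 2) * ENNReal.ofReal ((cw * w x) ^ 2) := by
        gcongr
        rw [← eLpNorm_two_le_iff (by positivity), h.eLpNorm_X hm.w_meas x a η [0]]
        exact hm.w_mom x a
    _ = ENNReal.ofReal ((B * (cw * w x)) ^ 2) := by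
        rw [← ENNReal.ofReal_mul (by positivity), mul_pow B]

lemma Setting.f_eval_diff (h : Setting μ M F f X V) (hm : Moments μ f X cf cv cw L w v) {n : ℕ}
    {θ η : List ℤ} (hη : η ∉ desc θ) {B : ℝ} (hB0 : 0 ≤ B)
    (hB : ∀ z, eLpNorm (fun ω => v z - fun b => V n θ z b ω) 2 μ ≤ ENNReal.ofReal (B * w z))
    (x : 𝕏) (a : A) :
    eLpNorm (fun ω => f (X η x a ω) (v (X η x a ω))
        - f (X η x a ω) (fun b => V n θ (X η x a ω) b ω)) 2 μ
      ≤ ENNReal.ofReal (cw * L * B * w x) := by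
  have h1 : eLpNorm (fun ω => f (X η x a ω) (v (X η x a ω))
        - f (X η x a ω) (fun b => V n θ (X η x a ω) b ω)) 2 μ
      ≤ eLpNorm (L • fun ω => v (X η x a ω) - fun b => V n θ (X η x a ω) b ω) 2 μ := by
    refine eLpNorm_mono fun ω => ?_
    rw [Pi.smul_apply, norm_smul, Real.norm_of_nonneg hm.L_nonneg]
    exact hm.lip _ _ _
  refine h1.trans ?_
  rw [eLpNorm_const_smul, Real.enorm_of_nonneg hm.L_nonneg]
  refine (mul_le_mul_right (h.eval_diff hm hη hB0 hB x a) _).trans ?_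
  rw [← ENNReal.ofReal_mul hm.L_nonneg]
  exact ENNReal.ofReal_le_ofReal (by nlinarith)

lemma Setting.eLpNorm_f_v (h : Setting μ M F f X V) (hm : Moments μ f X cf cv cw L w v)
    (η : List ℤ) (x : 𝕏) (a : A) :
    eLpNorm (fun ω => f (X η x a ω) (v (X η x a ω))) 2 μ
      ≤ ENNReal.ofReal ((cf + L * cv) * w x) := by
  have hx := (hm.w_pos x).le
  have hcf := hm.cf_nonneg
  have hcv := hm.cv_nonneg
  have hL := hm.L_nonneg
  have hf0 : Measurable fun z => f z 0 := h.f_meas.comp (measurable_id.prodMk measurable_const)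
  have h1 : eLpNorm (fun ω => f (X η x a ω) (v (X η x a ω))) 2 μ
      ≤ eLpNorm ((fun ω => ‖f (X η x a ω) 0‖) + fun ω => L • ‖v (X η x a ω)‖) 2 μ := by
    refine eLpNorm_mono_real fun ω => ?_
    have h2 := hm.lip (X η x a ω) (v (X η x a ω)) 0
    rw [sub_zero] at h2
    simp only [Pi.add_apply, Real.norm_eq_abs, smul_eq_mul]
    have h3 := abs_add_le (f (X η x a ω) 0) (f (X η x a ω) (v (X η x a ω)) - f (X η x a ω) 0)
    rw [add_sub_cancel] at h3
    linarith
  have hXm := h.X_sec' η x a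
  refine h1.trans ((eLpNorm_add_le (hf0.comp hXm).norm.aestronglyMeasurable
    ((hm.v_meas.comp hXm).norm.const_mul L).aestronglyMeasurable (by norm_num)).trans ?_)
  have h4 : eLpNorm (fun ω => L • ‖v (X η x a ω)‖) 2 μ ≤ ENNReal.ofReal (L * (cv * w x)) := by
    refine (eLpNorm_const_smul L (fun ω => ‖v (X η x a ω)‖) 2 μ).le.trans ?_
    rw [eLpNorm_norm, Real.enorm_of_nonneg hL, ENNReal.ofReal_mul hL,
      h.eLpNorm_X hm.v_meas x a η [0]]
    gcongr
    exact hm.v_mom x a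
  have h5 : eLpNorm (fun ω => ‖f (X η x a ω) 0‖) 2 μ ≤ ENNReal.ofReal (cf * w x) := by
    rw [eLpNorm_norm, h.eLpNorm_X hf0 x a η [0]]
    exact hm.f_mom x a
  refine (add_le_add h5 h4).trans ?_
  rw [← ENNReal.ofReal_add (by positivity) (by positivity)]
  exact ENNReal.ofReal_le_ofReal (by nlinarith)

/-- The common expectation of `f (X η, V n θ (X η))`, evaluated at a fixed choice of indices. -/
noncomputable def meanEval (μ : Measure Ω) (f : 𝕏 → (A → ℝ) → ℝ) (X : List ℤ → 𝕏 → A → Ω → 𝕏)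
    (V : ℕ → List ℤ → 𝕏 → A → Ω → ℝ) (n : ℕ) (x : 𝕏) (a : A) : ℝ :=
  ∫ ω, f (X [0] x a ω) (fun b => V n [0] (X [0] x a ω) b ω) ∂μ

lemma Setting.integral_eval (h : Setting μ M F f X V) (n : ℕ) {θ η : List ℤ} (hη : η ∉ desc θ)
    (x : 𝕏) (a : A) :
    ∫ ω, f (X η x a ω) (fun b => V n θ (X η x a ω) b ω) ∂μ = meanEval μ f X V n x a := by
  have h1 := h.map_eval n hη (self_notMem_desc [0]) x a
  rw [meanEval, ← integral_map (h.eval_meas' n θ η x a).aemeasurable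
    (f := fun r : ℝ => r) measurable_id.aestronglyMeasurable, h1,
    integral_map (h.eval_meas' n [0] [0] x a).aemeasurable (f := fun r : ℝ => r)
      measurable_id.aestronglyMeasurable]

lemma Setting.integrable_f_v (h : Setting μ M F f X V) (hm : Moments μ f X cf cv cw L w v)
    (η : List ℤ) (x : 𝕏) (a : A) : Integrable (fun ω => f (X η x a ω) (v (X η x a ω))) μ :=
  MemLp.integrable (q := 2) (by norm_num) ⟨(h.v_eval_meas hm.v_meas η x a).aestronglyMeasurable,
    (h.eLpNorm_f_v hm η x a).trans_lt ENNReal.ofReal_lt_top⟩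

lemma Setting.integrable_eval (h : Setting μ M F f X V) (hm : Moments μ f X cf cv cw L w v) {n : ℕ}
    {θ η : List ℤ} (hη : η ∉ desc θ) {B : ℝ} (hB0 : 0 ≤ B)
    (hB : ∀ z, eLpNorm (fun ω => v z - fun b => V n θ z b ω) 2 μ ≤ ENNReal.ofReal (B * w z))
    (x : 𝕏) (a : A) :
    Integrable (fun ω => f (X η x a ω) (fun b => V n θ (X η x a ω) b ω)) μ := by
  have h2 : Integrable (fun ω => f (X η x a ω) (v (X η x a ω))
        - f (X η x a ω) (fun b => V n θ (X η x a ω) b ω)) μ :=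
    MemLp.integrable (q := 2) (by norm_num)
      ⟨((h.v_eval_meas hm.v_meas η x a).sub (h.eval_meas' n θ η x a)).aestronglyMeasurable,
      (h.f_eval_diff hm hη hB0 hB x a).trans_lt ENNReal.ofReal_lt_top⟩
  refine ((h.integrable_f_v hm η x a).sub h2).congr (.of_forall fun ω => ?_)
  simp

/-! ### The error recursion -/

/-- The constant in the `L²`-bound for the level-`l` increments, in terms of error bounds `B` for
the approximations. -/
def levelBound (cf c : ℝ) (B : ℕ → ℝ) (l : ℕ) : ℝ :=
  if l = 0 then cf else c * (B l + B (l - 1))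

lemma levelBound_nonneg {cf c : ℝ} {B : ℕ → ℝ} (hcf : 0 ≤ cf) (hc : 0 ≤ c) (hB : ∀ l, 0 ≤ B l)
    (l : ℕ) : 0 ≤ levelBound cf c B l := by
  unfold levelBound
  split_ifs
  · exact hcf
  · exact mul_nonneg hc (add_nonneg (hB _) (hB _))

lemma pos_notMem_pos (θ : List ℤ) (l i : ℕ) : pos θ l i ∉ desc (pos θ l i) :=
  self_notMem_desc _

lemma pos_notMem_neg (θ : List ℤ) (l i : ℕ) : pos θ l i ∉ desc (neg θ l i) :=
  notMem_desc_of_length (by simp)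

lemma Setting.eLpNorm_incr (h : Setting μ M F f X V) (hm : Moments μ f X cf cv cw L w v)
    {B : ℕ → ℝ} (hB0 : ∀ l, 0 ≤ B l) {n : ℕ}
    (hB : ∀ l < n, ∀ θ z,
      eLpNorm (fun ω => v z - fun b => V l θ z b ω) 2 μ ≤ ENNReal.ofReal (B l * w z))
    {l : ℕ} (hl : l < n) (θ : List ℤ) (i : ℕ) (x : 𝕏) (a : A) :
    eLpNorm (incr f X V θ l i x a) 2 μ ≤ ENNReal.ofReal (levelBound cf (cw * L) B l * w x) := by
  have hx := (hm.w_pos x).le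
  have hc : 0 ≤ cw * L := mul_nonneg hm.cw_nonneg hm.L_nonneg
  by_cases hl0 : l = 0
  · subst hl0
    have hf0 : Measurable fun z => f z 0 := h.f_meas.comp (measurable_id.prodMk measurable_const)
    have h1 : incr f X V θ 0 i x a = fun ω => f (X (pos θ 0 i) x a ω) 0 := by
      funext ω
      simp only [incr, h.V_zero, if_true, sub_zero]
      rfl
    rw [h1, h.eLpNorm_X hf0 x a _ [0]]
    simpa [levelBound] using hm.f_mom x a
  · -- Both evaluations are compared with the evaluation of `v` at the same random point.
    have h1 : incr f X V θ l i x a = (fun ω =>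
          f (X (pos θ l i) x a ω) (v (X (pos θ l i) x a ω))
            - f (X (pos θ l i) x a ω) (fun b => V (l - 1) (neg θ l i) (X (pos θ l i) x a ω) b ω))
        - fun ω => f (X (pos θ l i) x a ω) (v (X (pos θ l i) x a ω))
            - f (X (pos θ l i) x a ω) (fun b => V l (pos θ l i) (X (pos θ l i) x a ω) b ω) := by
      funext ω
      simp only [incr, hl0, if_false, Pi.sub_apply]
      ring
    have hv := h.v_eval_meas hm.v_meas (pos θ l i) x a
    rw [h1]
    refine (eLpNorm_sub_le (hv.sub (h.eval_meas' _ _ _ x a)).aestronglyMeasurable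
      (hv.sub (h.eval_meas' _ _ _ x a)).aestronglyMeasurable (by norm_num)).trans ?_
    refine (add_le_add
      (h.f_eval_diff hm (pos_notMem_neg θ l i) (hB0 _) (hB (l - 1) (by omega) _) x a)
      (h.f_eval_diff hm (pos_notMem_pos θ l i) (hB0 _) (hB l hl _) x a)).trans ?_
    have h2 := mul_nonneg (mul_nonneg hc (hB0 l)) hx
    have h3 := mul_nonneg (mul_nonneg hc (hB0 (l - 1))) hx
    rw [← ENNReal.ofReal_add h3 h2]
    refine ENNReal.ofReal_le_ofReal (le_of_eq ?_)
    simp only [levelBound, hl0, if_false]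
    ring

lemma Setting.integral_incr (h : Setting μ M F f X V) (hm : Moments μ f X cf cv cw L w v)
    {B : ℕ → ℝ} (hB0 : ∀ l, 0 ≤ B l) {n : ℕ}
    (hB : ∀ l < n, ∀ θ z,
      eLpNorm (fun ω => v z - fun b => V l θ z b ω) 2 μ ≤ ENNReal.ofReal (B l * w z))
    {l : ℕ} (hl : l < n) (θ : List ℤ) (i : ℕ) (x : 𝕏) (a : A) :
    ∫ ω, incr f X V θ l i x a ω ∂μ
      = meanEval μ f X V l x a - if l = 0 then 0 else meanEval μ f X V (l - 1) x a := by
  have h1 := h.integral_eval l (pos_notMem_pos θ l i) x a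
  by_cases hl0 : l = 0
  · simpa only [incr, hl0, if_true, sub_zero] using! h1
  · simp only [incr, hl0, if_false]
    rw [integral_sub (h.integrable_eval hm (pos_notMem_pos θ l i) (hB0 _) (hB l hl _) x a)
      (h.integrable_eval hm (pos_notMem_neg θ l i) (hB0 _) (hB (l - 1) (by omega) _) x a), h1,
      h.integral_eval (l - 1) (pos_notMem_neg θ l i) x a]

lemma Setting.incr_indep (h : Setting μ M F f X V) (θ : List ℤ) (l : ℕ) (x : 𝕏) (a : A) :
    Pairwise fun i j => IndepFun (incr f X V θ l i x a) (incr f X V θ l j x a) μ := by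
  intro i j hij
  rw [IndepFun_iff_Indep]
  have hd : Disjoint (block θ l i) (block θ l j) := disjoint_block θ (by simp [hij])
  exact indep_of_indep_of_le_left (indep_of_indep_of_le_right
    (indep_iSup_of_disjoint h.le h.indep hd) (h.incr_meas θ l j x a).comap_le)
    (h.incr_meas θ l i x a).comap_le

lemma telescope (g : ℕ → ℝ) (n : ℕ) :
    ∑ l ∈ Finset.range (n + 1), (g l - if l = 0 then 0 else g (l - 1)) = g n := by
  induction n with
  | zero => simp
  | succ n ih => rw [Finset.sum_range_succ, ih]; simp

/-- The statistical error: fluctuations of `V (n + 1) θ` around its mean, which is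
`meanEval … n` by telescoping over the levels. -/
lemma Setting.eLpNorm_stat (h : Setting μ M F f X V) (hm : Moments μ f X cf cv cw L w v)
    (hM : 0 < M) {B : ℕ → ℝ} (hB0 : ∀ l, 0 ≤ B l) {n : ℕ}
    (hB : ∀ l < n + 1, ∀ θ z,
      eLpNorm (fun ω => v z - fun b => V l θ z b ω) 2 μ ≤ ENNReal.ofReal (B l * w z))
    (θ : List ℤ) (x : 𝕏) (a : A) :
    eLpNorm (fun ω => meanEval μ f X V n x a - V (n + 1) θ x a ω) 2 μ
      ≤ ENNReal.ofReal ((∑ l ∈ Finset.range (n + 1),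
          (√M)⁻¹ ^ (n + 1 - l) * levelBound cf (cw * L) B l) * w x) := by
  have hx := (hm.w_pos x).le
  have hc : 0 ≤ cw * L := mul_nonneg hm.cw_nonneg hm.L_nonneg
  have hK := levelBound_nonneg hm.cf_nonneg hc hB0
  let d : ℕ → ℝ := fun l =>
    meanEval μ f X V l x a - if l = 0 then 0 else meanEval μ f X V (l - 1) x a
  let D : ℕ → Ω → ℝ := fun l ω => d l - ((M ^ (n + 1 - l) : ℕ) : ℝ)⁻¹ *
    ∑ i ∈ Finset.range (M ^ (n + 1 - l)), incr f X V θ l i x a ω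
  have hinc : ∀ l i, Measurable (incr f X V θ l i x a) := fun l i =>
    (h.incr_meas θ l i x a).mono (sig_le h.le _) le_rfl
  have hD : ∀ l, Measurable (D l) := fun l =>
    measurable_const.sub ((Finset.measurable_fun_sum _ fun i _ => hinc l i).const_mul _)
  have h1 : (fun ω => meanEval μ f X V n x a - V (n + 1) θ x a ω)
      = ∑ l ∈ Finset.range (n + 1), D l := by
    funext ω
    rw [Finset.sum_apply, Finset.sum_sub_distrib, telescope (fun l => meanEval μ f X V l x a),
      h.V_eq (n + 1)]
    push_cast
    rfl
  rw [h1, Finset.sum_mul,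
    ENNReal.ofReal_sum_of_nonneg fun l _ => mul_nonneg (mul_nonneg (by positivity) (hK l)) hx]
  refine (eLpNorm_sum_le (fun l _ => (hD l).aestronglyMeasurable) (by norm_num)).trans ?_
  refine Finset.sum_le_sum fun l hl => ?_
  have hl : l < n + 1 := Finset.mem_range.1 hl
  refine (eLpNorm_average_le (pow_pos hM _) (mul_nonneg (hK l) hx) (hinc l)
    (fun i => h.eLpNorm_incr hm hB0 hB hl θ i x a)
    (fun i => h.integral_incr hm hB0 hB hl θ i x a) (h.incr_indep θ l x a)).trans ?_
  refine ENNReal.ofReal_le_ofReal (le_of_eq ?_)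
  have h2 : √((M ^ (n + 1 - l) : ℕ) : ℝ) = √(M : ℝ) ^ (n + 1 - l) := by
    rw [Real.sqrt_eq_iff_mul_self_eq (by positivity) (by positivity), ← mul_pow,
      Real.mul_self_sqrt (by positivity)]
    push_cast
    rfl
  rw [h2, inv_pow]
  ring

/-- The bias: the mean of `V (n + 1) θ` is one fixed point iteration applied to `V n`. -/
lemma Setting.bias_le (h : Setting μ M F f X V) (hm : Moments μ f X cf cv cw L w v)
    {n : ℕ} {B : ℝ} (hB0 : 0 ≤ B)
    (hB : ∀ z, eLpNorm (fun ω => v z - fun b => V n [0] z b ω) 2 μ ≤ ENNReal.ofReal (B * w z))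
    (x : 𝕏) (a : A) : |v x a - meanEval μ f X V n x a| ≤ cw * L * B * w x := by
  have h0 := self_notMem_desc [0]
  rw [hm.fix, meanEval,
    ← integral_sub (h.integrable_f_v hm _ x a) (h.integrable_eval hm h0 hB0 hB x a)]
  exact abs_integral_le_of_eLpNorm ((h.v_eval_meas hm.v_meas _ x a).sub (h.eval_meas' _ _ _ x a))
    (mul_nonneg (mul_nonneg (mul_nonneg hm.cw_nonneg hm.L_nonneg) hB0) (hm.w_pos x).le)
    (h.f_eval_diff hm h0 hB0 hB x a)

lemma Setting.error_step (h : Setting μ M F f X V) (hm : Moments μ f X cf cv cw L w v)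
    (hM : 0 < M) {B : ℕ → ℝ} (hB0 : ∀ l, 0 ≤ B l) {n : ℕ}
    (hB : ∀ l < n + 1, ∀ θ z,
      eLpNorm (fun ω => v z - fun b => V l θ z b ω) 2 μ ≤ ENNReal.ofReal (B l * w z))
    (θ : List ℤ) (x : 𝕏) :
    eLpNorm (fun ω => v x - fun b => V (n + 1) θ x b ω) 2 μ
      ≤ ENNReal.ofReal ((cw * L * B n + Fintype.card A * ∑ l ∈ Finset.range (n + 1),
          (√M)⁻¹ ^ (n + 1 - l) * levelBound cf (cw * L) B l) * w x) := by
  have hx := (hm.w_pos x).le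
  have hc : 0 ≤ cw * L := mul_nonneg hm.cw_nonneg hm.L_nonneg
  have hK := levelBound_nonneg hm.cf_nonneg hc hB0
  have hS : 0 ≤ ∑ l ∈ Finset.range (n + 1), (√M)⁻¹ ^ (n + 1 - l) * levelBound cf (cw * L) B l :=
    Finset.sum_nonneg fun l _ => mul_nonneg (by positivity) (hK l)
  have hVm : ∀ a, Measurable fun ω => V (n + 1) θ x a ω := by
    have := (prod_measurable_section (h.V_joint (n + 1) θ) x).mono (sig_le h.le _) le_rfl
    exact fun a => (measurable_pi_apply a).comp this
  let m : A → ℝ := fun a => meanEval μ f X V n x a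
  have hsm : ∀ a, Measurable fun ω => m a - V (n + 1) θ x a ω := fun a =>
    measurable_const.sub (hVm a)
  have h1 : (fun ω => v x - fun b => V (n + 1) θ x b ω)
      = (fun _ => v x - m) + fun ω a => m a - V (n + 1) θ x a ω := by
    funext ω a
    simp
  rw [h1]
  refine (eLpNorm_add_le aestronglyMeasurable_const
    (measurable_pi_iff.2 hsm).aestronglyMeasurable (by norm_num)).trans ?_
  have h2 : eLpNorm (fun _ : Ω => v x - m) 2 μ ≤ ENNReal.ofReal (cw * L * B n * w x) := by
    rw [eLpNorm_const _ (by norm_num) (IsProbabilityMeasure.ne_zero μ)]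
    simp only [measure_univ, ENNReal.one_rpow, mul_one]
    rw [← ofReal_norm]
    refine ENNReal.ofReal_le_ofReal ((pi_norm_le_iff_of_nonneg
      (mul_nonneg (mul_nonneg hc (hB0 n)) hx)).2 fun a => ?_)
    exact h.bias_le hm (hB0 n) (hB n (by omega) [0]) x a
  refine (add_le_add h2 (eLpNorm_pi_le hsm
    fun a => h.eLpNorm_stat hm hM hB0 hB θ x a)).trans ?_
  rw [← ENNReal.ofReal_add (mul_nonneg (mul_nonneg hc (hB0 n)) hx) (by positivity)]
  exact ENNReal.ofReal_le_ofReal (le_of_eq (by ring))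

lemma Setting.error_zero (h : Setting μ M F f X V) (hm : Moments μ f X cf cv cw L w v)
    (θ : List ℤ) (x : 𝕏) :
    eLpNorm (fun ω => v x - fun b => V 0 θ x b ω) 2 μ
      ≤ ENNReal.ofReal ((cf + L * cv) * w x) := by
  have hx := (hm.w_pos x).le
  have h0 : 0 ≤ (cf + L * cv) * w x :=
    mul_nonneg (add_nonneg hm.cf_nonneg (mul_nonneg hm.L_nonneg hm.cv_nonneg)) hx
  have h1 : (fun ω => v x - fun b => V 0 θ x b ω) = fun _ => v x := by
    funext ω a
    simp [h.V_zero]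
  rw [h1, eLpNorm_const _ (by norm_num) (IsProbabilityMeasure.ne_zero μ)]
  simp only [measure_univ, ENNReal.one_rpow, mul_one]
  rw [← ofReal_norm]
  refine ENNReal.ofReal_le_ofReal ((pi_norm_le_iff_of_nonneg h0).2 fun a => ?_)
  rw [hm.fix]
  exact abs_integral_le_of_eLpNorm (h.v_eval_meas hm.v_meas _ x a) h0 (h.eLpNorm_f_v hm _ x a)

end

/-! ### Geometric decay -/

lemma geom_sum_le {q β : ℝ} (hq : 0 ≤ q) (hqβ : q < β) (n : ℕ) :
    ∑ l ∈ Finset.range n, q ^ (n - l) * β ^ l ≤ β ^ n * (q / (β - q)) := by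
  have hβ : 0 < β - q := by linarith
  induction n with
  | zero => simp; positivity
  | succ n ih =>
    rw [Finset.sum_range_succ]
    have h1 : ∑ l ∈ Finset.range n, q ^ (n + 1 - l) * β ^ l
        = q * ∑ l ∈ Finset.range n, q ^ (n - l) * β ^ l := by
      rw [Finset.mul_sum]
      refine Finset.sum_congr rfl fun l hl => ?_
      rw [Nat.succ_sub (Finset.mem_range.1 hl).le, pow_succ]
      ring
    rw [h1]
    have h2 := mul_le_mul_of_nonneg_left ih hq
    have h3 : β ^ (n + 1) * (q / (β - q)) = q * (β ^ n * (q / (β - q))) + q * β ^ n := by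
      field_simp
      ring
    rw [h3]
    simp only [Nat.add_sub_cancel_left, pow_one]
    linarith

/-- The size condition on `M`, with `q = M ^ (-1/2)`, leaves room for a geometric rate `β < 1`. -/
lemma exists_rate {c s q : ℝ} (hq : 0 ≤ q) (hq1 : q < 1) (h : c + s * c * 2 * (q / (1 - q)) < 1) :
    ∃ β, q < β ∧ 0 < β ∧ β < 1 ∧ c / β + s * (c * (1 + 1 / β)) * (q / (β - q)) < 1 := by
  have hcont : ContinuousAt (fun β : ℝ => c / β + s * (c * (1 + 1 / β)) * (q / (β - q))) 1 := by
    have : (1 : ℝ) - q ≠ 0 := by linarith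
    fun_prop (disch := simp)
  have h1 : (fun β : ℝ => c / β + s * (c * (1 + 1 / β)) * (q / (β - q))) 1 < 1 := by
    norm_num
    linarith
  have h2 := (hcont.eventually_lt continuousAt_const h1).filter_mono
    (nhdsWithin_le_nhds (s := Set.Iio 1))
  have h3 : ∀ᶠ β in nhdsWithin (1 : ℝ) (Set.Iio 1), q < β :=
    (lt_mem_nhds hq1).filter_mono nhdsWithin_le_nhds
  obtain ⟨β, h4, h5, h6⟩ := (h2.and (h3.and self_mem_nhdsWithin)).exists
  exact ⟨β, h5, hq.trans_lt h5, h6, h4⟩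

/-- Geometric sequences with a suitable rate and a large prefactor are super-solutions of the error
recursion. -/
lemma rate_step {cf c s q β γ : ℝ} (hcf : 0 ≤ cf) (hc : 0 ≤ c) (hs : 0 ≤ s) (hq : 0 ≤ q)
    (hqβ : q < β) (hβ : 0 < β) (hγ : 0 ≤ γ)
    (hγ' : s * cf ≤ γ * (1 - (c / β + s * (c * (1 + 1 / β)) * (q / (β - q))))) (n : ℕ) :
    c * (γ * β ^ n) + s * ∑ l ∈ Finset.range (n + 1),
      q ^ (n + 1 - l) * levelBound cf c (fun l => γ * β ^ l) l ≤ γ * β ^ (n + 1) := by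
  have h1 : ∀ l, levelBound cf c (fun l => γ * β ^ l) l
      ≤ (if l = 0 then cf else 0) + γ * (c * (1 + 1 / β)) * β ^ l := by
    intro l
    rcases l with _ | l
    · simp [levelBound]
      positivity
    · simp only [levelBound, Nat.add_sub_cancel, if_false, Nat.succ_ne_zero]
      refine le_of_eq ?_
      field_simp
      ring
  have h2 : ∑ l ∈ Finset.range (n + 1), q ^ (n + 1 - l) * levelBound cf c (fun l => γ * β ^ l) l
      ≤ q ^ (n + 1) * cf + γ * (c * (1 + 1 / β)) * (β ^ (n + 1) * (q / (β - q))) := by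
    calc _ ≤ ∑ l ∈ Finset.range (n + 1),
          (q ^ (n + 1 - l) * (if l = 0 then cf else 0)
            + γ * (c * (1 + 1 / β)) * (q ^ (n + 1 - l) * β ^ l)) := by
          refine Finset.sum_le_sum fun l _ => ?_
          have := mul_le_mul_of_nonneg_left (h1 l) (pow_nonneg hq (n + 1 - l))
          linarith
      _ = q ^ (n + 1) * cf + γ * (c * (1 + 1 / β)) *
            ∑ l ∈ Finset.range (n + 1), q ^ (n + 1 - l) * β ^ l := by
          rw [Finset.sum_add_distrib, ← Finset.mul_sum]
          simp
      _ ≤ _ := by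
          have := geom_sum_le hq hqβ (n + 1)
          gcongr
  have h3 : q ^ (n + 1) ≤ β ^ (n + 1) := pow_le_pow_left₀ hq hqβ.le _
  have h4 : s * (q ^ (n + 1) * cf) ≤ β ^ (n + 1) * (s * cf) := by
    have := mul_le_mul_of_nonneg_right h3 (mul_nonneg hs hcf)
    linarith
  have h5 := mul_le_mul_of_nonneg_left hγ' (pow_pos hβ (n + 1)).le
  have h6 : c * (γ * β ^ n) = γ * β ^ (n + 1) * (c / β) := by
    field_simp
    ring
  have h7 := mul_le_mul_of_nonneg_left h2 hs
  rw [h6]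
  linarith

lemma iSup_abs_eq_norm {A : Type*} [Fintype A] [Nonempty A] (r : A → ℝ) : ⨆ a, |r a| = ‖r‖ := by
  refine le_antisymm (ciSup_le fun a => norm_le_pi_norm r a) ?_
  refine (pi_norm_le_iff_of_nonempty _).2 fun a => ?_
  exact le_ciSup (f := fun a => |r a|) (Set.finite_range _).bddAbove a

end MLFP

/-- Convergence of MLFP approximations (Corollary 3.9 of the paper).  In the MLFP setting with
finite `A`, if moreover `c_ω L < 1` and `M > (1 + c_ω L(2|A|−1))²(1 − c_ω L)^{−2}`, then
`limsup_{n→∞} sup_{x∈𝕏} (E[‖v(x) − V_n^0(x)‖_∞²]/ω(x)²)^{1/2} = 0`, formulated as: for every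
`ε > 0` there exists `N` such that for all `n ≥ N` and all `x ∈ 𝕏` the normalized `L²`-error
is at most `ε`. -/
theorem stmt14
    {𝕏 : Type*} [mX : MeasurableSpace 𝕏] [Nonempty 𝕏]
    {Ω : Type*} [mΩ : MeasurableSpace Ω] (μ : Measure Ω) [IsProbabilityMeasure μ]
    {A : Type*} [Fintype A] [Nonempty A]
    (M : ℕ)
    (F : List ℤ → MeasurableSpace Ω) (hFsub : ∀ θ, F θ ≤ mΩ)
    (hFindep : ProbabilityTheory.iIndep F μ)
    (f : 𝕏 → (A → ℝ) → ℝ)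
    (hf : Measurable fun p : 𝕏 × (A → ℝ) => f p.1 p.2)
    (X : List ℤ → 𝕏 → A → Ω → 𝕏)
    (hXmeas : ∀ θ : List ℤ,
      @Measurable (𝕏 × Ω) (A → 𝕏) (mX.prod (F θ)) MeasurableSpace.pi
        fun p => fun a => X θ p.1 a p.2)
    (hXid : ∀ θ η : List ℤ,
      Measure.map (fun ω => fun p : 𝕏 × A => X θ p.1 p.2 ω) μ
        = Measure.map (fun ω => fun p : 𝕏 × A => X η p.1 p.2 ω) μ)
    (V : ℕ → List ℤ → 𝕏 → A → Ω → ℝ)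
    (hV : ∀ (n : ℕ) (θ : List ℤ) (x : 𝕏) (a : A) (ω : Ω),
      V n θ x a ω =
        ∑ l ∈ Finset.range n, ((M : ℝ) ^ (n - l))⁻¹ *
          ∑ i ∈ Finset.range (M ^ (n - l)),
            (f (X (θ ++ [(l : ℤ), (i : ℤ) + 1]) x a ω)
                (fun b => V l (θ ++ [(l : ℤ), (i : ℤ) + 1])
                  (X (θ ++ [(l : ℤ), (i : ℤ) + 1]) x a ω) b ω)
              - if l = 0 then 0 else
                f (X (θ ++ [(l : ℤ), (i : ℤ) + 1]) x a ω)
                  (fun b => V (l - 1) (θ ++ [-(l : ℤ), (i : ℤ) + 1])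
                    (X (θ ++ [(l : ℤ), (i : ℤ) + 1]) x a ω) b ω)))
    (cf cv cw L : ℝ) (hcf : 0 ≤ cf) (hcv : 0 ≤ cv) (hcw : 0 ≤ cw) (hL : 0 ≤ L)
    (w : 𝕏 → ℝ) (hw_pos : ∀ x, 0 < w x) (hw_meas : Measurable w)
    (v : 𝕏 → A → ℝ) (hv_meas : Measurable v)
    (hf_lip : ∀ (x : 𝕏) (r s : A → ℝ), |f x r - f x s| ≤ L * ⨆ b : A, |r b - s b|)
    (hf0_mom : ∀ (x : 𝕏) (a : A),
      (∫⁻ ω, ENNReal.ofReal (|f (X ([0]) x a ω) 0| ^ 2) ∂μ)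
        ≤ ENNReal.ofReal ((cf * w x) ^ 2))
    (hv_mom : ∀ (x : 𝕏) (a : A),
      (∫⁻ ω, ENNReal.ofReal ((⨆ b : A, |v (X ([0]) x a ω) b|) ^ 2) ∂μ)
        ≤ ENNReal.ofReal ((cv * w x) ^ 2))
    (hw_mom : ∀ (x : 𝕏) (a : A),
      (∫⁻ ω, ENNReal.ofReal (w (X ([0]) x a ω) ^ 2) ∂μ)
        ≤ ENNReal.ofReal ((cw * w x) ^ 2))
    (hv_fix : ∀ x a, v x a = ∫ ω, f (X ([0]) x a ω) (v (X ([0]) x a ω)) ∂μ)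
    (hcwL : cw * L < 1)
    (hM : (1 + cw * L * (2 * (Fintype.card A : ℝ) - 1)) ^ 2 / (1 - cw * L) ^ 2 < (M : ℝ))
    :
    ∀ ε : ℝ, 0 < ε → ∃ N : ℕ, ∀ n : ℕ, N ≤ n → ∀ x : 𝕏,
      (∫⁻ ω, ENNReal.ofReal ((⨆ a : A, |v x a - V n ([0]) x a ω|) ^ 2) ∂μ)
        ≤ ENNReal.ofReal ((ε * w x) ^ 2) := by
  -- The hypotheses in the form of the setting, with suprema over `A` read as sup-norms.
  have hS : MLFP.Setting μ M F f X V := ⟨hFsub, hFindep, hf, hXmeas, hXid, hV⟩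
  have hm : MLFP.Moments μ f X cf cv cw L w v := by
    refine ⟨hcf, hcv, hcw, hL, hw_pos, hw_meas, hv_meas, fun x r s => ?_, fun x a => ?_,
      fun x a => ?_, fun x a => ?_, hv_fix⟩
    · have h1 := hf_lip x r s
      rwa [show (⨆ b, |r b - s b|) = ‖r - s‖ from MLFP.iSup_abs_eq_norm (r - s)] at h1
    · rw [MLFP.eLpNorm_two_le_iff (mul_nonneg hcf (hw_pos x).le)]
      exact hf0_mom x a
    · rw [MLFP.eLpNorm_two_le_iff (mul_nonneg hcv (hw_pos x).le)]
      simpa only [MLFP.iSup_abs_eq_norm] using! hv_mom x a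
    · rw [MLFP.eLpNorm_two_le_iff (mul_nonneg hcw (hw_pos x).le)]
      simpa only [Real.norm_eq_abs, sq_abs] using! hw_mom x a
  set c := cw * L with hc_def
  set s : ℝ := (Fintype.card A : ℝ) with hs_def
  have hc : 0 ≤ c := mul_nonneg hcw hL
  have hs : 1 ≤ s := by
    rw [hs_def]
    exact_mod_cast Fintype.card_pos
  have hc1 : 0 < 1 - c := by linarith
  have hb0 : 1 ≤ 1 + c * (2 * s - 1) := by nlinarith
  -- The hypothesis on `M` in terms of `√M`.
  have hMs : (1 + c * (2 * s - 1)) / (1 - c) < √(M : ℝ) := by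
    refine Real.lt_sqrt_of_sq_lt ?_
    rwa [div_pow]
  have hM1 : 1 < √(M : ℝ) := by
    refine lt_of_le_of_lt ?_ hMs
    rw [le_div_iff₀ hc1]
    linarith
  have hMpos : 0 < M := by
    rcases Nat.eq_zero_or_pos M with h0 | h0
    · rw [h0] at hM1
      norm_num at hM1
    · exact h0
  have hq : 0 ≤ (√(M : ℝ))⁻¹ := by positivity
  have hq1 : (√(M : ℝ))⁻¹ < 1 := inv_lt_one_of_one_lt₀ hM1
  have hcond : c + s * c * 2 * ((√(M : ℝ))⁻¹ / (1 - (√(M : ℝ))⁻¹)) < 1 := by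
    rw [div_lt_iff₀ hc1] at hMs
    have h1 : (√(M : ℝ))⁻¹ / (1 - (√(M : ℝ))⁻¹) = 1 / (√(M : ℝ) - 1) := by
      have : √(M : ℝ) - 1 ≠ 0 := by linarith
      field_simp
    have h2 : s * c * 2 * (1 / (√(M : ℝ) - 1)) < 1 - c := by
      rw [mul_one_div, div_lt_iff₀ (by linarith)]
      nlinarith
    rw [h1]
    linarith
  obtain ⟨β, hqβ, hβ, hβ1, hκ⟩ := MLFP.exists_rate hq hq1 hcond
  set κ := c / β + s * (c * (1 + 1 / β)) * ((√(M : ℝ))⁻¹ / (β - (√(M : ℝ))⁻¹)) with hκ_def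
  -- The prefactor dominates both the initial error and the inhomogeneity `s * cf`.
  set γ := (cf + L * cv) + s * cf / (1 - κ) with hγ_def
  have hκ' : 0 < 1 - κ := by linarith
  have hi : 0 ≤ cf + L * cv := by positivity
  have hj : 0 ≤ s * cf / (1 - κ) := by positivity
  have hγ : 0 ≤ γ := add_nonneg hi hj
  have hγ' : s * cf ≤ γ * (1 - κ) := by
    rw [hγ_def, add_mul, div_mul_cancel₀ _ hκ'.ne']
    nlinarith
  have main : ∀ n θ x, eLpNorm (fun ω => v x - fun b => V n θ x b ω) 2 μ
      ≤ ENNReal.ofReal (γ * β ^ n * w x) := by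
    intro n
    induction n using Nat.strong_induction_on with
    | _ n ih =>
      intro θ x
      have hx := (hw_pos x).le
      rcases n with _ | n
      · refine (hS.error_zero hm θ x).trans (ENNReal.ofReal_le_ofReal ?_)
        rw [pow_zero, mul_one]
        exact mul_le_mul_of_nonneg_right (by linarith) hx
      · refine (hS.error_step hm hMpos (B := fun l => γ * β ^ l) (fun l => by positivity)
          ih θ x).trans (ENNReal.ofReal_le_ofReal ?_)
        exact mul_le_mul_of_nonneg_right
          (MLFP.rate_step hcf hc (by linarith) hq hqβ hβ hγ hγ' n) hx
  intro ε hε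
  have hlim : Filter.Tendsto (fun n => γ * β ^ n) Filter.atTop (nhds 0) := by
    simpa using (tendsto_pow_atTop_nhds_zero_of_lt_one hβ.le hβ1).const_mul γ
  obtain ⟨N, hN⟩ := Filter.eventually_atTop.1 (hlim.eventually (gt_mem_nhds hε))
  refine ⟨N, fun n hn x => ?_⟩
  have hx := (hw_pos x).le
  have h1 : eLpNorm (fun ω => v x - fun b => V n [0] x b ω) 2 μ ≤ ENNReal.ofReal (ε * w x) :=
    (main n [0] x).trans (ENNReal.ofReal_le_ofReal
      (mul_le_mul_of_nonneg_right (hN n hn).le hx))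
  rw [MLFP.eLpNorm_two_le_iff (by positivity)] at h1
  simp only [← MLFP.iSup_abs_eq_norm] at h1
  exact h1
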